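/- arXiv:1403.2527 — 4 statements merged into one kernel-verified Lean document; each statement's English description precedes it below -/
import Mathlib

section
/- Suppose assumptions (D1) and (D2) on the recharge rates hold. Let v̄* ∈ ℝ^M satisfy v̄* ≥ 0, uᵀ·v̄* = 1, and R·v̄* ≤ f*·u with f* < 0. Let (v^(n))_{n≥1} be a fixed (deterministic) sequence of decision vectors with ‖Σ_{t=1}^{n} v^(t) − n·v̄*‖_∞ ≤ M for all n ≥ 1. Then lim_{e0 → ∞} P( e^(n) ≥ 0 componentwise for all n ≥ 1 ) = 1. -/
open MeasureTheory Filter Finset Matrix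

/-- Available energy of base station `m` at the end of slot `n`:
`e^(n) = e0·u + τ·Σ_{t=1}^n s^(t) − τ·C·Σ_{t=1}^n v^(t)`. -/
noncomputable def energyVec {M : ℕ} (τ : ℝ) (C : Matrix (Fin M) (Fin M) ℝ)
    (e0 : ℝ) (s v : ℕ → Fin M → ℝ) (n : ℕ) (m : Fin M) : ℝ :=
  e0 + τ * (∑ t ∈ Finset.Icc 1 n, s t m)
    - τ * C.mulVec (∑ t ∈ Finset.Icc 1 n, v t) m

/-- A decision vector: entries in `{0,1}` with exactly one `1` (i.e. `uᵀv = 1`). -/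
def IsDecision {M : ℕ} (v : Fin M → ℝ) : Prop :=
  (∀ m, v m = 0 ∨ v m = 1) ∧ (∑ m, v m) = 1

/-!
With `c = C v̄* < s̄`, the tracking bound shows that each net energy consumption stays within a
constant of `∑ t ≤ n, (c - s t)`, a process with bounded increments and conditional drift at most
`c - s̄ < 0`. For such a process `f` and small `l > 0`, the exponential `exp (l * (f n - f 0))` is a
nonnegative supermartingale, because `exp x ≤ 1 + x + x ^ 2` near `0` and the second-order term is
absorbed by the drift. It converges almost surely, so `f` is almost surely bounded above. Hence
almost every outcome is covered by some finite initial energy, and continuity of `μ` from below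
gives the limit.
-/

section Measure

variable {Ω : Type*} {m m0 : MeasurableSpace Ω} {μ : Measure Ω}

theorem tendsto_measure_of_monotone_of_ae_exists_mem {ι : Type*} [Preorder ι]
    [IsCountablyGenerated (atTop : Filter ι)] {A : ι → Set Ω} (hA : Monotone A)
    (hcover : ∀ᵐ ω ∂μ, ∃ i, ω ∈ A i) :
    Tendsto (fun i => μ (A i)) atTop (nhds (μ Set.univ)) := by
  have hunion : ⋃ i, A i =ᵐ[μ] Set.univ :=
    eventuallyEq_univ.2 (hcover.mono fun _ hω => Set.mem_iUnion.2 hω)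
  exact measure_congr hunion ▸ tendsto_measure_iUnion_atTop hA

theorem condExp_eval {ι : Type*} [Fintype ι] {E : ι → Type*} [∀ i, NormedAddCommGroup (E i)]
    [∀ i, NormedSpace ℝ (E i)] [∀ i, CompleteSpace (E i)] {X : Ω → ∀ i, E i}
    (hX : Integrable X μ) (i : ι) :
    μ[fun ω => X ω i | m] =ᵐ[μ] fun ω => (μ[X | m]) ω i :=
  ((ContinuousLinearMap.proj (R := ℝ) (φ := E) i).comp_condExp_comm hX).symm

/-- The filtration `σ(X 1), σ(X 1, X 2), …` generated by a process whose time starts at `1`: unlike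
in `Filtration.natural`, the value `X 0` is left out. -/
def naturalFromOne {β : Type*} [MeasurableSpace β] (X : ℕ → Ω → β) (hX : ∀ n, Measurable (X n)) :
    Filtration ℕ m0 where
  seq n := ⨆ i ∈ Icc 1 n, MeasurableSpace.comap (X i) inferInstance
  mono' _ _ h := biSup_mono fun _ hi => Icc_subset_Icc_right h hi
  le' _ := iSup₂_le fun i _ => (hX i).comap_le

theorem measurable_naturalFromOne {β : Type*} [MeasurableSpace β] {X : ℕ → Ω → β}
    (hX : ∀ n, Measurable (X n)) (n : ℕ) : Measurable[naturalFromOne X hX (n + 1)] (X (n + 1)) := by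
  have hmem : n + 1 ∈ Icc 1 (n + 1) := right_mem_Icc.2 (Nat.le_add_left 1 n)
  exact (comap_measurable (X (n + 1))).mono
    (le_biSup (fun i => MeasurableSpace.comap (X i) inferInstance) hmem) le_rfl

end Measure

theorem norm_sub_zero_le_nat_mul {E : Type*} [SeminormedAddCommGroup E] {x : ℕ → E} {K : ℝ}
    (hx : ∀ n, ‖x (n + 1) - x n‖ ≤ K) (n : ℕ) : ‖x n - x 0‖ ≤ n * K := by
  simpa [dist_eq_norm', norm_sub_rev] using
    dist_le_range_sum_of_dist_le (f := x) (d := fun _ => K) n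
      fun {k} _ => (dist_eq_norm' _ _).trans_le (hx k)

section Drift

variable {Ω : Type*} {m m0 : MeasurableSpace Ω} {μ : Measure Ω} [IsFiniteMeasure μ]
  {ℱ : Filtration ℕ m0} {f g : ℕ → Ω → ℝ} {K δ l : ℝ}

theorem exp_mul_le_of_abs_le {x : ℝ} (hx : |x| ≤ K) (hl : 0 ≤ l) (hlK : l * K ≤ 1) :
    Real.exp (l * x) ≤ 1 + l ^ 2 * K ^ 2 + l * x := by
  have hlx : |l * x| ≤ 1 := by
    rw [abs_mul, abs_of_nonneg hl]
    exact (mul_le_mul_of_nonneg_left hx hl).trans hlK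
  have htaylor := (abs_le.1 (Real.abs_exp_sub_one_sub_id_le hlx)).2
  have hsq : (l * x) ^ 2 ≤ l ^ 2 * K ^ 2 := by
    rw [mul_pow, ← sq_abs x]
    gcongr
  linarith

theorem condExp_exp_mul_le_one {X : Ω → ℝ} (hm : m ≤ m0) (hX : AEStronglyMeasurable X μ)
    (hXK : ∀ᵐ ω ∂μ, |X ω| ≤ K) (hdrift : μ[X | m] ≤ᵐ[μ] fun _ => -δ)
    (hl : 0 ≤ l) (hlK : l * K ≤ 1) (hlδ : l * K ^ 2 ≤ δ) :
    μ[fun ω => Real.exp (l * X ω) | m] ≤ᵐ[μ] fun _ => 1 := by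
  have hXint : Integrable X μ := .of_bound hX K hXK
  have hexp : μ[fun ω => Real.exp (l * X ω) | m] ≤ᵐ[μ]
      μ[(fun _ => 1 + l ^ 2 * K ^ 2) + l • X | m] :=
    condExp_mono (ProbabilityTheory.integrable_exp_mul_of_le l K hl hX.aemeasurable
      (hXK.mono fun _ hω => (abs_le.1 hω).2)) ((integrable_const _).add (hXint.smul l))
      (hXK.mono fun _ hω => exp_mul_le_of_abs_le hω hl hlK)
  filter_upwards [hexp, condExp_add (integrable_const (1 + l ^ 2 * K ^ 2)) (hXint.smul l) m,
    condExp_smul (μ := μ) l X m, hdrift] with ω hexpω haddω hsmulω hdriftω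
  rw [haddω, condExp_const hm, Pi.add_apply, hsmulω, Pi.smul_apply, smul_eq_mul] at hexpω
  calc (μ[fun ω => Real.exp (l * X ω) | m]) ω
      ≤ 1 + l ^ 2 * K ^ 2 + l * (μ[X | m]) ω := hexpω
    _ ≤ 1 + l * δ + l * -δ := by
        have hsq : l ^ 2 * K ^ 2 ≤ l * δ := by nlinarith
        gcongr
    _ = 1 := by ring

theorem supermartingale_exp_mul_sub (hf : StronglyAdapted ℱ f)
    (hbdd : ∀ n, ∀ᵐ ω ∂μ, |f (n + 1) ω - f n ω| ≤ K)
    (hdrift : ∀ n, μ[f (n + 1) - f n | ℱ n] ≤ᵐ[μ] fun _ => -δ)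
    (hl : 0 ≤ l) (hlK : l * K ≤ 1) (hlδ : l * K ^ 2 ≤ δ) :
    Supermartingale (fun n ω => Real.exp (l * (f n ω - f 0 ω))) ℱ μ := by
  have hmeas (n : ℕ) : StronglyMeasurable (f n) := (hf n).mono (ℱ.le n)
  have hadapted : StronglyAdapted ℱ (fun n ω => Real.exp (l * (f n ω - f 0 ω))) := fun n =>
    Real.continuous_exp.comp_stronglyMeasurable
      (((hf n).sub (hf.stronglyMeasurable_le n.zero_le)).const_mul l)
  have hint (n : ℕ) : Integrable (fun ω => Real.exp (l * (f n ω - f 0 ω))) μ :=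
    ProbabilityTheory.integrable_exp_mul_of_le l (n * K) hl
      ((hmeas n).sub (hmeas 0)).measurable.aemeasurable <| (ae_all_iff.2 hbdd).mono fun ω hω =>
        (abs_le.1 (norm_sub_zero_le_nat_mul (x := fun k => f k ω) hω n)).2
  refine supermartingale_nat hadapted hint fun n => ?_
  have hincr : StronglyMeasurable (f (n + 1) - f n) := (hmeas (n + 1)).sub (hmeas n)
  have hfactor : (fun ω => Real.exp (l * (f (n + 1) ω - f 0 ω))) =
      (fun ω => Real.exp (l * (f n ω - f 0 ω))) *
        fun ω => Real.exp (l * (f (n + 1) - f n) ω) := by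
    ext ω
    rw [Pi.mul_apply, ← Real.exp_add, Pi.sub_apply]
    ring_nf
  have hpull := condExp_mul_of_stronglyMeasurable_left (hadapted n) (hfactor ▸ hint (n + 1))
    (ProbabilityTheory.integrable_exp_mul_of_le l K hl hincr.measurable.aemeasurable
      ((hbdd n).mono fun _ hω => (abs_le.1 hω).2))
  rw [← hfactor] at hpull
  filter_upwards [hpull, condExp_exp_mul_le_one (ℱ.le n) hincr.aestronglyMeasurable (hbdd n)
    (hdrift n) hl hlK hlδ] with ω hpullω hleω
  rw [hpullω, Pi.mul_apply]
  exact mul_le_of_le_one_right (Real.exp_pos _).le hleω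

theorem ae_bddAbove_range_of_supermartingale_of_nonneg (hg : Supermartingale g ℱ μ)
    (hnonneg : ∀ n, 0 ≤ g n) : ∀ᵐ ω ∂μ, BddAbove (Set.range fun n => g n ω) := by
  have hL1 (n : ℕ) : eLpNorm ((-g) n) 1 μ ≤ (∫ ω, g 0 ω ∂μ).toNNReal := by
    rw [Pi.neg_apply, eLpNorm_neg, eLpNorm_one_eq_lintegral_enorm,
      ← ofReal_integral_norm_eq_lintegral_enorm (hg.integrable n)]
    refine ENNReal.ofReal_le_ofReal ?_
    simpa [abs_of_nonneg (hnonneg n _)] using hg.setIntegral_le n.zero_le MeasurableSet.univ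
  filter_upwards [hg.neg.exists_ae_tendsto_of_bdd hL1] with ω ⟨c, hc⟩
  simpa using hc.neg.bddAbove_range

theorem ae_bddAbove_range_of_condExp_sub_le_neg (hf : StronglyAdapted ℱ f)
    (hbdd : ∀ n, ∀ᵐ ω ∂μ, |f (n + 1) ω - f n ω| ≤ K) (hδ : 0 < δ)
    (hdrift : ∀ n, μ[f (n + 1) - f n | ℱ n] ≤ᵐ[μ] fun _ => -δ) :
    ∀ᵐ ω ∂μ, BddAbove (Set.range fun n => f n ω) := by
  obtain ⟨l, hl, hlK, hlδ⟩ : ∃ l : ℝ, 0 < l ∧ l * K ≤ 1 ∧ l * K ^ 2 ≤ δ := by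
    refine ⟨min 1 δ / (1 + K ^ 2), by positivity, ?_, ?_⟩ <;>
      rw [div_mul_eq_mul_div, div_le_iff₀ (by positivity)]
    · nlinarith [min_le_left 1 δ, lt_min one_pos hδ, sq_nonneg (K - 1)]
    · nlinarith [min_le_right 1 δ, sq_nonneg K]
  filter_upwards [ae_bddAbove_range_of_supermartingale_of_nonneg
    (supermartingale_exp_mul_sub hf hbdd hdrift hl.le hlK hlδ)
    fun _ _ => (Real.exp_pos _).le] with ω ⟨B, hB⟩
  refine ⟨B / l + f 0 ω, Set.forall_mem_range.2 fun n => ?_⟩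
  have hexp : Real.exp (l * (f n ω - f 0 ω)) ≤ B := hB ⟨n, rfl⟩
  rw [← sub_le_iff_le_add, le_div_iff₀' hl]
  linarith [Real.add_one_le_exp (l * (f n ω - f 0 ω))]

theorem ae_bddAbove_range_sum_const_sub {X : ℕ → Ω → ℝ} {c a : ℝ}
    (hX : ∀ n, StronglyMeasurable[ℱ (n + 1)] (X (n + 1)))
    (hXK : ∀ n, ∀ᵐ ω ∂μ, |X (n + 1) ω| ≤ K)
    (hmean : ∀ n, (fun _ => a) ≤ᵐ[μ] μ[X (n + 1) | ℱ n]) (hca : c < a) :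
    ∀ᵐ ω ∂μ, BddAbove (Set.range fun n => ∑ t ∈ Icc 1 n, (c - X t ω)) := by
  let f (n : ℕ) (ω : Ω) : ℝ := ∑ t ∈ Icc 1 n, (c - X t ω)
  have hincr (n : ℕ) : f (n + 1) - f n = (fun _ => c) - X (n + 1) := by
    ext ω
    simp only [f, Pi.sub_apply, sum_Icc_succ_top (Nat.le_add_left 1 n), add_sub_cancel_left]
  have hadapted : StronglyAdapted ℱ f := fun n => by
    refine Finset.stronglyMeasurable_fun_sum _ fun t ht => ?_
    obtain ⟨k, rfl⟩ := Nat.exists_eq_add_of_le' (mem_Icc.1 ht).1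
    exact stronglyMeasurable_const.sub ((hX k).mono (ℱ.mono (mem_Icc.1 ht).2))
  have hbdd (n : ℕ) : ∀ᵐ ω ∂μ, |f (n + 1) ω - f n ω| ≤ |c| + K := by
    filter_upwards [hXK n] with ω hω
    rw [← Pi.sub_apply, hincr, Pi.sub_apply]
    exact (abs_sub _ _).trans (add_le_add_right hω _)
  have hdrift (n : ℕ) : μ[f (n + 1) - f n | ℱ n] ≤ᵐ[μ] fun _ => -(a - c) := by
    have hXint : Integrable (X (n + 1)) μ :=
      .of_bound ((hX n).mono (ℱ.le _)).aestronglyMeasurable K (hXK n)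
    rw [hincr]
    filter_upwards [condExp_sub (integrable_const c) hXint (ℱ n), hmean n] with ω hsubω hmeanω
    rw [hsubω, condExp_const (ℱ.le n), Pi.sub_apply]
    linarith
  exact ae_bddAbove_range_of_condExp_sub_le_neg hadapted hbdd (sub_pos.2 hca) hdrift

end Drift

section MulVec

variable {ι κ R : Type*} [Fintype κ]

theorem mulVec_le_mulVec_add_of_abs_sub_le [Ring R] [LinearOrder R] [IsStrictOrderedRing R]
    {A : Matrix ι κ R} {x y : κ → R} {K : R} (h : ∀ j, |x j - y j| ≤ K) (i : ι) :
    (A *ᵥ x) i ≤ (A *ᵥ y) i + (∑ j, |A i j|) * K := by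
  have herror : (A *ᵥ (x - y)) i ≤ (∑ j, |A i j|) * K := by
    rw [sum_mul]
    refine sum_le_sum fun j _ => (le_abs_self _).trans ?_
    rw [abs_mul]
    exact mul_le_mul_of_nonneg_left (h j) (abs_nonneg _)
  rwa [mulVec_sub, Pi.sub_apply, sub_le_iff_le_add'] at herror

theorem sub_of_mulVec_apply [NonAssocRing R] (A : Matrix ι κ R) (a : ι → R) {x : κ → R}
    (hx : ∑ j, x j = 1) (i : ι) :
    ((A - Matrix.of fun i _ => a i) *ᵥ x) i = (A *ᵥ x) i - a i := by
  simp only [mulVec, dotProduct, Matrix.sub_apply, of_apply, sub_mul, sum_sub_distrib,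
    ← mul_sum, hx, mul_one]

end MulVec

section Energy

variable {M : ℕ}

/-- The energy per unit slot length that station `m` has consumed beyond its recharge after `n`
slots, so that `e^(n) = e0·u - τ·netConsumption`. -/
def netConsumption (C : Matrix (Fin M) (Fin M) ℝ) (s v : ℕ → Fin M → ℝ) (n : ℕ) (m : Fin M) : ℝ :=
  (C *ᵥ ∑ t ∈ Icc 1 n, v t) m - ∑ t ∈ Icc 1 n, s t m

variable {C : Matrix (Fin M) (Fin M) ℝ}

theorem energyVec_eq_sub_mul_netConsumption {τ e0 : ℝ} {s v : ℕ → Fin M → ℝ} {n : ℕ} {m : Fin M} :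
    energyVec τ C e0 s v n m = e0 - τ * netConsumption C s v n m := by
  rw [energyVec, netConsumption]
  ring

theorem netConsumption_le {s v : ℕ → Fin M → ℝ} {vbar : Fin M → ℝ} {K : ℝ} {n : ℕ}
    (hclose : ∀ j, |(∑ t ∈ Icc 1 n, v t j) - (n : ℝ) * vbar j| ≤ K) (m : Fin M) :
    netConsumption C s v n m ≤
      ∑ t ∈ Icc 1 n, ((C *ᵥ vbar) m - s t m) + (∑ j, |C m j|) * K := by
  have hmul : (C *ᵥ ∑ t ∈ Icc 1 n, v t) m ≤
      (C *ᵥ ((n : ℝ) • vbar)) m + (∑ j, |C m j|) * K :=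
    mulVec_le_mulVec_add_of_abs_sub_le (by simpa using hclose) m
  rw [mulVec_smul, Pi.smul_apply, smul_eq_mul] at hmul
  simp only [netConsumption, sum_sub_distrib, sum_const, Nat.card_Icc, add_tsub_cancel_right,
    nsmul_eq_mul]
  linarith

end Energy

section Recharge

variable {M : ℕ} {C : Matrix (Fin M) (Fin M) ℝ} {Ω : Type*} {m0 : MeasurableSpace Ω}
  {μ : Measure Ω} {s : ℕ → Ω → Fin M → ℝ} {v : ℕ → Fin M → ℝ} {vbar sbar : Fin M → ℝ} {S K τ : ℝ}

theorem ae_exists_netConsumption_le [IsFiniteMeasure μ] {ℱ : Filtration ℕ m0}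
    (hs : ∀ n, Measurable[ℱ (n + 1)] (s (n + 1)))
    (hbdd : ∀ n, ∀ᵐ ω ∂μ, ∀ m, |s (n + 1) ω m| ≤ S)
    (hmean : ∀ n, (fun _ => sbar) ≤ᵐ[μ] μ[s (n + 1) | ℱ n])
    (hlt : ∀ m, (C *ᵥ vbar) m < sbar m)
    (hclose : ∀ n, 1 ≤ n → ∀ m, |(∑ t ∈ Icc 1 n, v t m) - (n : ℝ) * vbar m| ≤ K) :
    ∀ᵐ ω ∂μ, ∃ B, ∀ n, 1 ≤ n → ∀ m, netConsumption C (fun t => s t ω) v n m ≤ B := by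
  have hsm (m : Fin M) (n : ℕ) : StronglyMeasurable[ℱ (n + 1)] fun ω => s (n + 1) ω m :=
    ((measurable_pi_apply m).comp (hs n)).stronglyMeasurable
  have hbddm (m : Fin M) (n : ℕ) : ∀ᵐ ω ∂μ, |s (n + 1) ω m| ≤ S :=
    (hbdd n).mono fun _ hω => hω m
  have hint (n : ℕ) : Integrable (s (n + 1)) μ := .of_eval fun m =>
    .of_bound ((hsm m n).mono (ℱ.le _)).aestronglyMeasurable S (hbddm m n)
  have hmeanm (m : Fin M) (n : ℕ) :
      (fun _ => sbar m) ≤ᵐ[μ] μ[fun ω => s (n + 1) ω m | ℱ n] := by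
    filter_upwards [hmean n, condExp_eval (hint n) m] with ω hω hevalω
    exact (hω m).trans_eq hevalω.symm
  have hdrift := ae_all_iff.2 fun m =>
    ae_bddAbove_range_sum_const_sub (X := fun n ω => s n ω m) (hsm m) (hbddm m) (hmeanm m) (hlt m)
  filter_upwards [hdrift] with ω hω
  choose b hb using hω
  obtain ⟨B, hB⟩ := (Set.finite_range fun m => b m + (∑ j, |C m j|) * K).bddAbove
  exact ⟨B, fun n hn m => (netConsumption_le (hclose n hn) m).trans <|
    (add_le_add_left (hb m ⟨n, rfl⟩) _).trans (hB ⟨m, rfl⟩)⟩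

theorem energies_nonneg_whp_of_fstar_neg_general [IsProbabilityMeasure μ] {ℱ : Filtration ℕ m0}
    (hτ : 0 ≤ τ) (hs : ∀ n, Measurable[ℱ (n + 1)] (s (n + 1)))
    (hbdd : ∀ n, ∀ᵐ ω ∂μ, ∀ m, |s (n + 1) ω m| ≤ S)
    (hmean : ∀ n, (fun _ => sbar) ≤ᵐ[μ] μ[s (n + 1) | ℱ n])
    (hlt : ∀ m, (C *ᵥ vbar) m < sbar m)
    (hclose : ∀ n, 1 ≤ n → ∀ m, |(∑ t ∈ Icc 1 n, v t m) - (n : ℝ) * vbar m| ≤ K) :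
    Tendsto (fun e0 : ℝ => μ {ω | ∀ n, 1 ≤ n → ∀ m,
        0 ≤ energyVec τ C e0 (fun t => s t ω) v n m})
      atTop (nhds 1) := by
  simp only [energyVec_eq_sub_mul_netConsumption, sub_nonneg]
  rw [← measure_univ (μ := μ)]
  refine tendsto_measure_of_monotone_of_ae_exists_mem
    (fun _ _ hle _ hω n hn m => (hω n hn m).trans hle) ?_
  filter_upwards [ae_exists_netConsumption_le hs hbdd hmean hlt hclose] with ω ⟨B, hB⟩
  exact ⟨τ * B, fun n hn m => mul_le_mul_of_nonneg_left (hB n hn m) hτ⟩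

end Recharge

/-- Under (D1) and (D2), if a fixed decision sequence tracks target fractions `v̄*`
(feasible for the LP with `f* < 0`) within `M`, then the probability that all energies
stay nonnegative forever tends to `1` as `e0 → ∞`. -/
theorem energies_nonneg_whp_of_fstar_neg
    {M : ℕ} (hM : 2 ≤ M)
    (τ : ℝ) (hτ : 0 < τ)
    (C : Matrix (Fin M) (Fin M) ℝ) (hC : ∀ i j, 0 ≤ C i j)
    (sbar : Fin M → ℝ) (S : ℝ) (hS : 0 < S)
    (hsbarS : ∀ m, 0 ≤ sbar m ∧ sbar m ≤ S)
    {Ω : Type*} {m0 : MeasurableSpace Ω} (μ : Measure Ω) [IsProbabilityMeasure μ]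
    (s : ℕ → Ω → Fin M → ℝ) (hmeas : ∀ n, Measurable (s n))
    -- (D1): constant conditional expectation given the past
    (hD1 : ∀ n, 1 ≤ n →
      (μ[s n | ⨆ i ∈ Finset.Icc 1 (n-1), MeasurableSpace.comap (s i) inferInstance]
        =ᵐ[μ] (fun _ => sbar)))
    -- (D2): boundedness
    (hD2 : ∀ n, 1 ≤ n → ∀ᵐ ω ∂μ, ∀ m, 0 ≤ s n ω m ∧ s n ω m ≤ S)
    (vbar : Fin M → ℝ) (fstar : ℝ) (hfstar : fstar < 0)
    (hvpos : ∀ m, 0 ≤ vbar m) (hvsum : (∑ m, vbar m) = 1)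
    (hfeas : ∀ m, (C - Matrix.of fun i _ => sbar i).mulVec vbar m ≤ fstar)
    (v : ℕ → Fin M → ℝ) (hvdec : ∀ t, IsDecision (v t))
    (hclose : ∀ n, 1 ≤ n → ∀ m,
      |(∑ t ∈ Finset.Icc 1 n, v t m) - (n : ℝ) * vbar m| ≤ M) :
    Tendsto (fun e0 : ℝ => μ {ω | ∀ n, 1 ≤ n → ∀ m,
        0 ≤ energyVec τ C e0 (fun t => s t ω) v n m})
      atTop (nhds 1) := by
  exact energies_nonneg_whp_of_fstar_neg_general hτ.le (measurable_naturalFromOne hmeas)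
    (fun n => (hD2 (n + 1) n.succ_pos).mono fun _ hω m =>
      (abs_of_nonneg (hω m).1).trans_le (hω m).2)
    (fun n => (hD1 (n + 1) n.succ_pos).symm.le)
    (fun m => sub_neg.1 <| (sub_of_mulVec_apply C sbar hvsum m).symm.trans_lt <|
      (hfeas m).trans_lt hfstar) hclose
end

section
/- Suppose assumptions (D1) and (D2) on the recharge rates hold. Let v̄* ∈ ℝ^M satisfy v̄* ≥ 0, uᵀ·v̄* = 1, and R·v̄* ≤ f*·u with f* < 0; set ρ = max_{i,j}|R_{ij}|, and for a BS index m set a_m = (R·v̄*)_m (so a_m ≤ f* < 0). Let (v^(n))_{n≥1} be a fixed (deterministic) sequence of decision vectors with ‖Σ_{t=1}^{n} v^(t) − n·v̄*‖_∞ ≤ M for all n ≥ 1, and suppose e0 > M²·τ·ρ. Then P( ∃ n ≥ 2 with e_m^(n) < 0 ) ≤ β · exp( (e0 − M²·τ·ρ)·a_m / (τ·S²) ), where β = Σ_{n=2}^{∞} exp( −n·a_m² / (2·S²) ) < ∞. -/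
open MeasureTheory Filter Finset Matrix

/-!
Fix a station. Its energy at slot `n` is `e0 - τ X n - n τ a - (tracking error)`, where `X n` is the
accumulated shortfall of the recharges below their conditional mean and the tracking error is at
most `M² τ ρ`. Running out of energy therefore forces the martingale `X` above a line of positive
slope `-a`. Since the increments of `X` are bounded by `S`, it is sub-Gaussian with variance proxy
`n S²` (Azuma), and the Chernoff bound with the *same* tilt `-a / S²` in every slot splits into a
geometric factor in `n` and a factor that does not depend on `n`. A union bound over `n` concludes.
-/

open ProbabilityTheory
open scoped NNReal

section BoundedDifferences

-- The chord of `y ↦ exp (θ * y)` over `[-d, d]`; for `d = 0` the junk value `x / 0 = 0` is harmless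
-- because then `y = 0`.
lemma exp_mul_le_cosh_add_sinh_div_mul {y d : ℝ} (hy : |y| ≤ d) (θ : ℝ) :
    Real.exp (θ * y) ≤ Real.cosh (θ * d) + Real.sinh (θ * d) / d * y := by
  obtain rfl | hd := ((abs_nonneg y).trans hy).eq_or_lt
  · simp [abs_nonpos_iff.1 hy]
  have hyd : |y / d| ≤ 1 := by rwa [abs_div, abs_of_pos hd, div_le_one hd]
  calc Real.exp (θ * y) = Real.exp (y / d * (θ * d)) := by congr 1; field_simp
    _ ≤ Real.cosh (θ * d) + y / d * Real.sinh (θ * d) :=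
        Real.exp_mul_le_cosh_add_mul_sinh hyd (θ * d)
    _ = Real.cosh (θ * d) + Real.sinh (θ * d) / d * y := by ring

variable {Ω : Type*} {m m0 : MeasurableSpace Ω} {μ : Measure Ω}

lemma integral_mul_eq_zero_of_condExp_eq_zero (hm : m ≤ m0) [SigmaFinite (μ.trim hm)]
    {f g : Ω → ℝ} (hf : StronglyMeasurable[m] f) (hfg : Integrable (f * g) μ)
    (hg : Integrable g μ) (hg0 : μ[g | m] =ᵐ[μ] 0) : ∫ ω, f ω * g ω ∂μ = 0 := by
  have hpull : μ[f * g | m] =ᵐ[μ] 0 := by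
    filter_upwards [condExp_mul_of_stronglyMeasurable_left hf hfg hg, hg0] with ω hω hω0
    rw [hω, Pi.mul_apply, hω0, Pi.zero_apply, mul_zero]
  calc ∫ ω, f ω * g ω ∂μ = ∫ ω, (μ[f * g | m]) ω ∂μ := (integral_condExp hm).symm
    _ = 0 := integral_eq_zero_of_ae hpull

lemma condExp_const_sub_ae_eq_zero (hm : m ≤ m0) [IsFiniteMeasure μ] {f : Ω → ℝ} {b : ℝ}
    (hf : Integrable f μ) (hfb : μ[f | m] =ᵐ[μ] fun _ => b) : μ[fun ω => b - f ω | m] =ᵐ[μ] 0 := by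
  filter_upwards [condExp_sub (m := m) (integrable_const b) hf, hfb] with ω hω hfω
  rw [Pi.sub_apply, condExp_const hm, hfω, sub_self] at hω
  exact hω

lemma hasSubgaussianMGF_add_of_condExp_eq_zero [IsFiniteMeasure μ] (hm : m ≤ m0)
    {X Y : Ω → ℝ} {c d : ℝ≥0} (hXm : StronglyMeasurable[m] X) (hX : HasSubgaussianMGF X c μ)
    (hYm : AEStronglyMeasurable Y μ) (hY0 : μ[Y | m] =ᵐ[μ] 0) (hYd : ∀ᵐ ω ∂μ, |Y ω| ≤ d) :
    HasSubgaussianMGF (fun ω => X ω + Y ω) (c + d ^ 2) μ := by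
  have hXexp := hX.integrable_exp_mul
  have hXYexp (θ : ℝ) : Integrable (fun ω => Real.exp (θ * X ω) * Y ω) μ :=
    (hXexp θ).mul_bdd hYm hYd
  have hchord (θ : ℝ) : ∀ᵐ ω ∂μ, Real.exp (θ * (X ω + Y ω)) ≤
      Real.cosh (θ * d) * Real.exp (θ * X ω)
        + Real.sinh (θ * d) / d * (Real.exp (θ * X ω) * Y ω) := by
    filter_upwards [hYd] with ω hω
    calc Real.exp (θ * (X ω + Y ω)) = Real.exp (θ * X ω) * Real.exp (θ * Y ω) := by
          rw [mul_add, Real.exp_add]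
      _ ≤ Real.exp (θ * X ω) * (Real.cosh (θ * d) + Real.sinh (θ * d) / d * Y ω) := by
          gcongr; exact exp_mul_le_cosh_add_sinh_div_mul hω θ
      _ = _ := by ring
  have hchord_int (θ : ℝ) := ((hXexp θ).const_mul (Real.cosh (θ * d))).add
    ((hXYexp θ).const_mul (Real.sinh (θ * d) / d))
  have hexp (θ : ℝ) : Integrable (fun ω => Real.exp (θ * (X ω + Y ω))) μ := by
    refine (hchord_int θ).mono' (Real.continuous_exp.comp_aestronglyMeasurable
      ((hX.aestronglyMeasurable.add hYm).const_mul θ)) ?_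
    filter_upwards [hchord θ] with ω hω
    rwa [Real.norm_of_nonneg (Real.exp_pos _).le]
  refine ⟨hexp, fun θ => ?_⟩
  have hcross : ∫ ω, Real.exp (θ * X ω) * Y ω ∂μ = 0 :=
    integral_mul_eq_zero_of_condExp_eq_zero hm
      (Real.continuous_exp.comp_stronglyMeasurable (hXm.const_mul θ)) (hXYexp θ)
      (Integrable.of_bound hYm d hYd) hY0
  calc mgf (fun ω => X ω + Y ω) μ θ
      ≤ Real.cosh (θ * d) * mgf X μ θ := by
        refine (integral_mono_ae (hexp θ) (hchord_int θ) (hchord θ)).trans_eq ?_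
        simp only [Pi.add_apply]
        rw [integral_add ((hXexp θ).const_mul _) ((hXYexp θ).const_mul _), integral_const_mul,
          integral_const_mul, hcross, mul_zero, add_zero, mgf]
    _ ≤ Real.exp ((θ * d) ^ 2 / 2) * Real.exp (c * θ ^ 2 / 2) := by
        gcongr
        · exact mgf_nonneg
        · exact Real.cosh_le_exp_half_sq _
        · exact hX.mgf_le θ
    _ = Real.exp ((c + d ^ 2 : ℝ≥0) * θ ^ 2 / 2) := by
        rw [← Real.exp_add]; push_cast; ring_nf

lemma hasSubgaussianMGF_sum_Icc_of_condExp_eq_zero [IsProbabilityMeasure μ]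
    {𝓕 : Filtration ℕ m0} {Y : ℕ → Ω → ℝ} {d : ℕ → ℝ≥0}
    (hYm : ∀ n, StronglyMeasurable[𝓕 (n + 1)] (Y (n + 1)))
    (hY0 : ∀ n, μ[Y (n + 1) | 𝓕 n] =ᵐ[μ] 0)
    (hYd : ∀ n, ∀ᵐ ω ∂μ, |Y (n + 1) ω| ≤ d (n + 1)) (n : ℕ) :
    HasSubgaussianMGF (fun ω => ∑ t ∈ Icc 1 n, Y t ω) (∑ t ∈ Icc 1 n, d t ^ 2) μ := by
  induction n with
  | zero => simp
  | succ n ih =>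
    have hpast : StronglyMeasurable[𝓕 n] (fun ω => ∑ t ∈ Icc 1 n, Y t ω) := by
      refine Finset.stronglyMeasurable_fun_sum _ fun t ht => ?_
      obtain ⟨k, rfl⟩ := Nat.exists_eq_add_of_le' (Finset.mem_Icc.1 ht).1
      exact (hYm k).mono (𝓕.mono (Finset.mem_Icc.1 ht).2)
    simp only [Finset.sum_Icc_succ_top (Nat.le_add_left 1 n)]
    exact hasSubgaussianMGF_add_of_condExp_eq_zero (𝓕.le n) hpast ih
      ((hYm n).mono (𝓕.le (n + 1))).aestronglyMeasurable (hY0 n) (hYd n)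

end BoundedDifferences

section LinearBoundary

lemma summable_exp_neg_nat_add_mul_sq {b c : ℝ} (hb : b ≠ 0) (hc : 0 < c) (N : ℕ) :
    Summable fun n : ℕ => Real.exp (-((n + N) * b ^ 2) / (2 * c)) := by
  have hrate : -(b ^ 2 / (2 * c)) < 0 := neg_neg_of_pos (by positivity)
  refine ((summable_nat_add_iff N).2 (Real.summable_exp_nat_mul_iff.2 hrate)).congr fun n => ?_
  push_cast
  ring_nf

variable {Ω : Type*} {m0 : MeasurableSpace Ω} {μ : Measure Ω}

lemma measureReal_linear_le_of_hasSubgaussianMGF [IsFiniteMeasure μ] {X : Ω → ℝ} {n : ℕ} {c : ℝ≥0}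
    (hX : HasSubgaussianMGF X (n * c) μ) (hc : 0 < c) {b : ℝ} (hb : 0 ≤ b) (x : ℝ) :
    μ.real {ω | x + n * b ≤ X ω} ≤
      Real.exp (-(n * b ^ 2) / (2 * c)) * Real.exp (-(x * b) / c) := by
  calc μ.real {ω | x + n * b ≤ X ω}
      ≤ Real.exp (-(b / c) * (x + n * b)) * mgf X μ (b / c) :=
        measure_ge_le_exp_mul_mgf _ (by positivity) (hX.integrable_exp_mul _)
    _ ≤ Real.exp (-(b / c) * (x + n * b)) * Real.exp ((n * c : ℝ≥0) * (b / c) ^ 2 / 2) := by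
        gcongr; exact hX.mgf_le _
    _ = Real.exp (-(n * b ^ 2) / (2 * c)) * Real.exp (-(x * b) / c) := by
        rw [← Real.exp_add, ← Real.exp_add]
        congr 1
        push_cast
        field_simp
        ring

lemma measure_exists_linear_le_of_hasSubgaussianMGF [IsFiniteMeasure μ] {X : ℕ → Ω → ℝ} {c : ℝ≥0}
    {N : ℕ} (hX : ∀ n, N ≤ n → HasSubgaussianMGF (X n) (n * c) μ) (hc : 0 < c) {b : ℝ} (hb : 0 < b)
    (x : ℝ) :
    μ {ω | ∃ n, N ≤ n ∧ x + n * b ≤ X n ω} ≤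
      ENNReal.ofReal ((∑' n : ℕ, Real.exp (-((n + N) * b ^ 2) / (2 * c))) *
        Real.exp (-(x * b) / c)) := by
  have hcover : {ω | ∃ n, N ≤ n ∧ x + n * b ≤ X n ω} ⊆
      ⋃ k : ℕ, {ω | x + (k + N : ℕ) * b ≤ X (k + N) ω} := by
    rintro ω ⟨n, hn, hω⟩
    obtain ⟨k, rfl⟩ := Nat.exists_eq_add_of_le' hn
    exact Set.mem_iUnion.2 ⟨k, hω⟩
  calc μ {ω | ∃ n, N ≤ n ∧ x + n * b ≤ X n ω}
      ≤ ∑' k : ℕ, μ {ω | x + (k + N : ℕ) * b ≤ X (k + N) ω} :=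
        (measure_mono hcover).trans (measure_iUnion_le _)
    _ ≤ ∑' k : ℕ, ENNReal.ofReal (Real.exp (-((k + N) * b ^ 2) / (2 * c)) *
          Real.exp (-(x * b) / c)) := by
        refine ENNReal.tsum_le_tsum fun k => ?_
        rw [← ofReal_measureReal, ← Nat.cast_add]
        exact ENNReal.ofReal_le_ofReal <|
          measureReal_linear_le_of_hasSubgaussianMGF (hX _ (Nat.le_add_left N k)) hc hb.le x
    _ = ENNReal.ofReal ((∑' n : ℕ, Real.exp (-((n + N) * b ^ 2) / (2 * c))) *
          Real.exp (-(x * b) / c)) := by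
        rw [← tsum_mul_right, ENNReal.ofReal_tsum_of_nonneg (fun k => by positivity)
          ((summable_exp_neg_nat_add_mul_sq hb.ne' (NNReal.coe_pos.2 hc) N).mul_right _)]

end LinearBoundary

section EnergyBalance

variable {M : ℕ}

/-- The paper's `R = C - s̄ uᵀ`: entry `(i, j)` is the expected net energy drain rate of station `i`
while station `j` is selected. -/
def netDrain (C : Matrix (Fin M) (Fin M) ℝ) (sbar : Fin M → ℝ) : Matrix (Fin M) (Fin M) ℝ :=
  C - Matrix.of fun i _ => sbar i

lemma netDrain_mulVec (C : Matrix (Fin M) (Fin M) ℝ) (sbar x : Fin M → ℝ) (m : Fin M) :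
    (netDrain C sbar).mulVec x m = C.mulVec x m - sbar m * ∑ j, x j := by
  rw [netDrain, Matrix.sub_mulVec, Pi.sub_apply, Finset.mul_sum]
  rfl

lemma mulVec_le_card_mul {ι κ : Type*} [Fintype κ] {A : Matrix ι κ ℝ} {x : κ → ℝ} {i : ι}
    {ρ K : ℝ} (hA : ∀ j, |A i j| ≤ ρ) (hx : ∀ j, |x j| ≤ K) :
    A.mulVec x i ≤ Fintype.card κ * K * ρ := by
  calc A.mulVec x i ≤ ∑ _j : κ, ρ * K := by
        refine Finset.sum_le_sum fun j _ => (le_abs_self _).trans ?_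
        rw [abs_mul]
        exact mul_le_mul (hA j) (hx j) (abs_nonneg _) ((abs_nonneg _).trans (hA j))
    _ = Fintype.card κ * K * ρ := by
        rw [Finset.sum_const, Finset.card_univ, nsmul_eq_mul]; ring

lemma energyVec_eq_sub_deviations (τ : ℝ) (C : Matrix (Fin M) (Fin M) ℝ) (sbar vbar : Fin M → ℝ)
    (e0 : ℝ) (s : ℕ → Fin M → ℝ) {v : ℕ → Fin M → ℝ} {n : ℕ}
    (hv : ∀ t ∈ Icc 1 n, ∑ j, v t j = 1) (m : Fin M) :
    energyVec τ C e0 s v n m =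
      e0 - τ * (∑ t ∈ Icc 1 n, (sbar m - s t m) + n * (netDrain C sbar).mulVec vbar m
        + (netDrain C sbar).mulVec (∑ t ∈ Icc 1 n, v t - (n : ℝ) • vbar) m) := by
  have hcount : ∑ j, (∑ t ∈ Icc 1 n, v t) j = n := by
    simp only [Finset.sum_apply]
    rw [Finset.sum_comm, Finset.sum_congr rfl hv]
    simp
  have hdrain := netDrain_mulVec C sbar (∑ t ∈ Icc 1 n, v t) m
  rw [hcount] at hdrain
  rw [Matrix.mulVec_sub, Matrix.mulVec_smul, Pi.sub_apply, Pi.smul_apply, smul_eq_mul, hdrain,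
    Finset.sum_sub_distrib, Finset.sum_const, Nat.card_Icc, nsmul_eq_mul, energyVec]
  push_cast [Nat.add_sub_cancel]
  ring

lemma le_sum_deficit_of_energyVec_neg {τ : ℝ} (hτ : 0 < τ) {C : Matrix (Fin M) (Fin M) ℝ}
    {sbar vbar : Fin M → ℝ} {e0 ρ K : ℝ} {s v : ℕ → Fin M → ℝ} {n : ℕ} {m : Fin M}
    (hv : ∀ t ∈ Icc 1 n, ∑ j, v t j = 1) (hρ : ∀ j, |netDrain C sbar m j| ≤ ρ)
    (hK : ∀ j, |(∑ t ∈ Icc 1 n, v t j) - n * vbar j| ≤ K)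
    (hneg : energyVec τ C e0 s v n m < 0) :
    (e0 - M * K * τ * ρ) / τ + n * -(netDrain C sbar).mulVec vbar m ≤
      ∑ t ∈ Icc 1 n, (sbar m - s t m) := by
  have htrack : (netDrain C sbar).mulVec (∑ t ∈ Icc 1 n, v t - (n : ℝ) • vbar) m ≤ M * K * ρ := by
    simpa only [Fintype.card_fin] using mulVec_le_card_mul hρ fun j => by
      simpa only [Pi.sub_apply, Finset.sum_apply, Pi.smul_apply, smul_eq_mul] using hK j
  have hsplit : (e0 - M * K * τ * ρ) / τ = e0 / τ - M * K * ρ := by field_simp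
  rw [energyVec_eq_sub_deviations τ C sbar vbar e0 s hv m, sub_neg, ← div_lt_iff₀' hτ] at hneg
  linarith

end EnergyBalance

section RechargeHistory

variable {Ω E : Type*} {m m0 : MeasurableSpace Ω} {μ : Measure Ω}

/-- The history `σ(s 1, …, s n)` of a process; the index starts at `1`, so that `s 0` carries no
information and the σ-algebra at time `0` is trivial. -/
def historyFiltration [mE : MeasurableSpace E] (s : ℕ → Ω → E) (hs : ∀ n, Measurable (s n)) :
    Filtration ℕ m0 where
  seq n := ⨆ i ∈ Icc 1 n, MeasurableSpace.comap (s i) mE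
  mono' _ _ hkn := biSup_mono fun _ hi => Finset.Icc_subset_Icc_right hkn hi
  le' _ := iSup₂_le fun i _ => (hs i).comap_le

lemma measurable_historyFiltration [MeasurableSpace E] {s : ℕ → Ω → E}
    (hs : ∀ n, Measurable (s n)) (n : ℕ) :
    Measurable[historyFiltration s hs (n + 1)] (s (n + 1)) :=
  (comap_measurable (s (n + 1))).mono
    (le_iSup₂_of_le (n + 1) (Finset.mem_Icc.2 ⟨Nat.le_add_left 1 n, le_rfl⟩) le_rfl) le_rfl

lemma condExp_apply_ae_eq {ι : Type*} [Fintype ι] {f g : Ω → ι → ℝ} (hf : Integrable f μ)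
    (hfg : μ[f | m] =ᵐ[μ] g) (i : ι) : μ[fun ω => f ω i | m] =ᵐ[μ] fun ω => g ω i :=
  ((ContinuousLinearMap.proj (R := ℝ) (φ := fun _ : ι => ℝ) i).comp_condExp_comm hf).symm.trans
    (hfg.mono fun _ hω => congrFun hω i)

lemma integrable_of_forall_mem_Icc [IsFiniteMeasure μ] {ι : Type*} [Fintype ι] {f : Ω → ι → ℝ}
    (hf : Measurable f) {S : ℝ} (hfS : ∀ᵐ ω ∂μ, ∀ i, 0 ≤ f ω i ∧ f ω i ≤ S) : Integrable f μ :=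
  Integrable.of_eval fun i =>
    Integrable.of_mem_Icc 0 S ((measurable_pi_apply i).comp hf).aemeasurable
      (hfS.mono fun _ hω => hω i)

end RechargeHistory

theorem ruin_probability_bound_of_fstar_neg_general
    {M : ℕ} {τ : ℝ} (hτ : 0 < τ) (C : Matrix (Fin M) (Fin M) ℝ) (sbar : Fin M → ℝ)
    {S : ℝ} (hS : 0 < S) {Ω : Type*} {m0 : MeasurableSpace Ω} (μ : Measure Ω)
    [IsProbabilityMeasure μ] (𝓕 : Filtration ℕ m0) (s v : ℕ → Ω → Fin M → ℝ) (m : Fin M)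
    (hmeas : ∀ n, StronglyMeasurable[𝓕 (n + 1)] fun ω => s (n + 1) ω m)
    (hmean : ∀ n, μ[fun ω => s (n + 1) ω m | 𝓕 n] =ᵐ[μ] fun _ => sbar m)
    (hbound : ∀ n, ∀ᵐ ω ∂μ, |sbar m - s (n + 1) ω m| ≤ S)
    {ρ : ℝ} (hρ : ∀ j, |netDrain C sbar m j| ≤ ρ)
    (vbar : Fin M → ℝ) {K : ℝ} (hv : ∀ᵐ ω ∂μ, ∀ t, 1 ≤ t → ∑ j, v t ω j = 1)
    (hK : ∀ᵐ ω ∂μ, ∀ n, 1 ≤ n → ∀ j, |(∑ t ∈ Icc 1 n, v t ω j) - (n : ℝ) * vbar j| ≤ K)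
    {a : ℝ} (ha : a = (netDrain C sbar).mulVec vbar m) (ha_neg : a < 0) (e0 : ℝ) :
    Summable (fun n : ℕ => Real.exp (-(((n : ℝ) + 2) * a ^ 2) / (2 * S ^ 2))) ∧
    μ {ω | ∃ n : ℕ, 2 ≤ n ∧ energyVec τ C e0 (fun t => s t ω) (fun t => v t ω) n m < 0}
      ≤ ENNReal.ofReal ((∑' n : ℕ, Real.exp (-(((n : ℝ) + 2) * a ^ 2) / (2 * S ^ 2))) *
          Real.exp ((e0 - M * K * τ * ρ) * a / (τ * S ^ 2))) := by
  refine ⟨by simpa using summable_exp_neg_nat_add_mul_sq ha_neg.ne (pow_pos hS 2) 2, ?_⟩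
  lift S to ℝ≥0 using hS.le
  have hint (n : ℕ) : Integrable (fun ω => s (n + 1) ω m) μ := by
    simpa using (integrable_const (sbar m)).sub (Integrable.of_bound (stronglyMeasurable_const.sub
      ((hmeas n).mono (𝓕.le (n + 1)))).aestronglyMeasurable S (hbound n))
  have hsubgaussian (n : ℕ) :
      HasSubgaussianMGF (fun ω => ∑ t ∈ Icc 1 n, (sbar m - s t ω m)) (n * S ^ 2) μ := by
    simpa using hasSubgaussianMGF_sum_Icc_of_condExp_eq_zero (d := fun _ => S)
      (Y := fun t ω => sbar m - s t ω m) (fun n => stronglyMeasurable_const.sub (hmeas n))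
      (fun n => condExp_const_sub_ae_eq_zero (𝓕.le n) (hint n) (hmean n)) hbound n
  have hcross := measure_exists_linear_le_of_hasSubgaussianMGF (N := 2)
    (fun n _ => hsubgaussian n) (pow_pos (by exact_mod_cast hS) 2) (neg_pos.2 ha_neg)
    ((e0 - M * K * τ * ρ) / τ)
  have hexponent : -((e0 - M * K * τ * ρ) / τ * -a) / (S : ℝ) ^ 2 =
      (e0 - M * K * τ * ρ) * a / (τ * S ^ 2) := by
    field_simp
  push_cast [neg_sq, hexponent] at hcross
  refine (measure_mono_ae ?_).trans hcross
  filter_upwards [hv, hK] with ω hvω hKω ⟨n, hn, hneg⟩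
  exact ⟨n, hn, ha ▸ le_sum_deficit_of_energyVec_neg hτ
    (fun t ht => hvω t (Finset.mem_Icc.1 ht).1) hρ (hKω n (one_le_two.trans hn)) hneg⟩

/-- Under (D1) and (D2), with feasible target fractions `v̄*` (LP value `f* < 0`) tracked
within `M` by a fixed decision sequence, `a_m = (R·v̄*)_m ≤ f* < 0`, `ρ = max_{i,j}|R_{ij}|`
and `e0 > M²·τ·ρ`, the probability that station `m` ever runs out of energy is at most
`β·exp((e0 − M²τρ)·a_m/(τS²))` where `β = Σ_{n=2}^∞ exp(−n·a_m²/(2S²)) < ∞`. -/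
theorem ruin_probability_bound_of_fstar_neg
    {M : ℕ} (hM : 2 ≤ M)
    (τ : ℝ) (hτ : 0 < τ)
    (C : Matrix (Fin M) (Fin M) ℝ) (hC : ∀ i j, 0 ≤ C i j)
    (sbar : Fin M → ℝ) (S : ℝ) (hS : 0 < S)
    (hsbarS : ∀ m, 0 ≤ sbar m ∧ sbar m ≤ S)
    {Ω : Type*} {m0 : MeasurableSpace Ω} (μ : Measure Ω) [IsProbabilityMeasure μ]
    (s : ℕ → Ω → Fin M → ℝ) (hmeas : ∀ n, Measurable (s n))
    -- (D1): constant conditional expectation given the past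
    (hD1 : ∀ n, 1 ≤ n →
      (μ[s n | ⨆ i ∈ Finset.Icc 1 (n-1), MeasurableSpace.comap (s i) inferInstance]
        =ᵐ[μ] (fun _ => sbar)))
    -- (D2): boundedness
    (hD2 : ∀ n, 1 ≤ n → ∀ᵐ ω ∂μ, ∀ m, 0 ≤ s n ω m ∧ s n ω m ≤ S)
    (vbar : Fin M → ℝ) (fstar : ℝ) (hfstar : fstar < 0)
    (hvpos : ∀ m, 0 ≤ vbar m) (hvsum : (∑ m, vbar m) = 1)
    (hfeas : ∀ m, (C - Matrix.of fun i _ => sbar i).mulVec vbar m ≤ fstar)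
    (ρ : ℝ)
    (hρub : ∀ i j, |C i j - sbar i| ≤ ρ)
    (hρmem : ∃ i j, ρ = |C i j - sbar i|)
    (v : ℕ → Fin M → ℝ) (hvdec : ∀ t, IsDecision (v t))
    (hclose : ∀ n, 1 ≤ n → ∀ m,
      |(∑ t ∈ Finset.Icc 1 n, v t m) - (n : ℝ) * vbar m| ≤ M)
    (m : Fin M) (a : ℝ) (ha : a = (C - Matrix.of fun i _ => sbar i).mulVec vbar m)
    (e0 : ℝ) (he0 : (M : ℝ)^2 * τ * ρ < e0) :
    Summable (fun n : ℕ => Real.exp (-(((n : ℝ) + 2) * a^2) / (2 * S^2))) ∧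
    μ {ω | ∃ n : ℕ, 2 ≤ n ∧ energyVec τ C e0 (fun t => s t ω) v n m < 0}
      ≤ ENNReal.ofReal ((∑' n : ℕ, Real.exp (-(((n : ℝ) + 2) * a^2) / (2 * S^2))) *
          Real.exp ((e0 - (M : ℝ)^2 * τ * ρ) * a / (τ * S^2))) := by
  have hs (n : ℕ) : Integrable (s (n + 1)) μ :=
    integrable_of_forall_mem_Icc (hmeas _) (hD2 _ n.succ_pos)
  simpa only [sq] using ruin_probability_bound_of_fstar_neg_general hτ C sbar hS μ
    (historyFiltration s hmeas) s (fun t _ => v t) m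
    (fun n => ((measurable_pi_apply m).comp
      (measurable_historyFiltration hmeas n)).stronglyMeasurable)
    (fun n => condExp_apply_ae_eq (hs n) (hD1 (n + 1) n.succ_pos) m)
    (fun n => (hD2 (n + 1) n.succ_pos).mono fun _ hω =>
      abs_sub_le_of_nonneg_of_le (hsbarS m).1 (hsbarS m).2 (hω m).1 (hω m).2)
    (hρub m) vbar (ae_of_all _ fun _ t _ => (hvdec t).2) (ae_of_all _ fun _ => hclose) ha
    ((ha.trans_le (hfeas m)).trans_lt hfstar) e0
end

section
/- Let f* > 0 and δ > 0, and suppose f* is a lower bound on the auxiliary LP value, i.e. for every v̄ ∈ ℝ^M with v̄ ≥ 0 and uᵀ·v̄ = 1 there exists an index m with (R·v̄)_m ≥ f*. Let n0 be a positive integer with n0 ≥ (1+δ)·e0/(τ·f*), let v^(1),…,v^(n0) be decision vectors, let s^(1),…,s^(n0) ∈ ℝ^M, and suppose the resulting available energy satisfies e^(n0) ≥ 0 componentwise. Then there exists an index m* such that (1/n0)·Σ_{t=1}^{n0} ( s_{m*}^(t) − s̄_{m*} ) ≥ f*·δ/(1+δ). -/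
open Matrix Finset

/-!
The time average of the decisions lies in the simplex, so the LP bound applied to it yields a
station whose mean consumption exceeds its nominal recharge by at least `f*`. Since that station
survives, its mean consumption is at most its mean actual recharge plus `e0 / (τ n)`, the initial
energy spread over the slots; hence its mean deviation is at least `f* - e0 / (τ n)`, and the lower
bound on `n` makes `e0 / (τ n)` at most `f* / (1 + δ)`.
-/

theorem IsDecision.mem_stdSimplex {M : ℕ} {v : Fin M → ℝ} (hv : IsDecision v) :
    v ∈ stdSimplex ℝ (Fin M) :=
  ⟨fun m => (hv.1 m).elim Eq.ge fun h => zero_le_one.trans_eq h.symm, hv.2⟩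

theorem inv_card_smul_sum_mem_of_convex {𝕜 E α : Type*} [Field 𝕜] [LinearOrder 𝕜]
    [IsStrictOrderedRing 𝕜] [AddCommGroup E] [Module 𝕜 E] {K : Set E} (hK : Convex 𝕜 K)
    {T : Finset α} (hT : T.Nonempty) {x : α → E} (hx : ∀ t ∈ T, x t ∈ K) :
    (#T : 𝕜)⁻¹ • ∑ t ∈ T, x t ∈ K := by
  have hcard : (#T : 𝕜) ≠ 0 := Nat.cast_ne_zero.2 hT.card_ne_zero
  rw [Finset.smul_sum]
  refine hK.sum_mem (fun _ _ => by positivity) ?_ hx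
  rw [sum_const, nsmul_eq_mul, mul_inv_cancel₀ hcard]

theorem inv_card_mul_sum_sub_const {𝕜 α : Type*} [DivisionRing 𝕜] [CharZero 𝕜] {T : Finset α}
    (hT : T.Nonempty) (a : α → 𝕜) (b : 𝕜) :
    (#T : 𝕜)⁻¹ * ∑ t ∈ T, (a t - b) = (#T : 𝕜)⁻¹ * ∑ t ∈ T, a t - b := by
  have hcard : (#T : 𝕜) ≠ 0 := Nat.cast_ne_zero.2 hT.card_ne_zero
  rw [sum_sub_distrib, sum_const, nsmul_eq_mul, mul_sub, inv_mul_cancel_left₀ hcard]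

theorem replicateCol_mulVec_of_sum_eq_one {R ι κ : Type*} [NonAssocSemiring R] [Fintype κ]
    (b : ι → R) {x : κ → R} (hx : ∑ j, x j = 1) : replicateCol κ b *ᵥ x = b := by
  ext i
  simp only [mulVec, dotProduct, replicateCol_apply, ← mul_sum, hx, mul_one]

section LinearOrderedField

variable {𝕜 : Type*} [Field 𝕜] [LinearOrder 𝕜] [IsStrictOrderedRing 𝕜]

theorem energy_nonneg_iff_average_le {τ n : 𝕜} (hτ : 0 < τ) (hn : 0 < n) (e₀ S c : 𝕜) :
    0 ≤ e₀ + τ * S - τ * c ↔ n⁻¹ * c ≤ n⁻¹ * S + e₀ / (τ * n) := by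
  have surplus_eq : n⁻¹ * S + e₀ / (τ * n) - n⁻¹ * c = (e₀ + τ * S - τ * c) / (τ * n) := by
    field_simp
    ring
  rw [← sub_nonneg (b := n⁻¹ * c), surplus_eq, le_div_iff₀ (mul_pos hτ hn), zero_mul]

theorem mul_div_one_add_le_sub_div {τ n f δ e₀ : 𝕜} (hτ : 0 < τ) (hn : 0 < n) (hf : 0 < f)
    (hδ : -1 < δ) (h : (1 + δ) * e₀ / (τ * f) ≤ n) :
    f * δ / (1 + δ) ≤ f - e₀ / (τ * n) := by
  have hδ' : 0 < 1 + δ := neg_lt_iff_pos_add'.1 hδ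
  have initial_share_le : e₀ / (τ * n) ≤ f / (1 + δ) := by
    rw [div_le_iff₀ (mul_pos hτ hf)] at h
    rw [div_le_div_iff₀ (mul_pos hτ hn) hδ']
    linarith
  calc
    f * δ / (1 + δ) = f - f / (1 + δ) := by field_simp; ring
    _ ≤ f - e₀ / (τ * n) := sub_le_sub_left initial_share_le f

variable {ι κ α : Type*} [Fintype κ] {τ e₀ f : 𝕜} {C : Matrix ι κ 𝕜} {b : ι → 𝕜} {T : Finset α}
  {v : α → κ → 𝕜} {s : α → ι → 𝕜}

theorem exists_sub_div_le_average_deviation (hτ : 0 < τ) (hT : T.Nonempty)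
    (hlb : ∀ x ∈ stdSimplex 𝕜 κ, ∃ i, f ≤ ((C - replicateCol κ b) *ᵥ x) i)
    (hv : ∀ t ∈ T, v t ∈ stdSimplex 𝕜 κ)
    (hE : ∀ i, 0 ≤ e₀ + τ * ∑ t ∈ T, s t i - τ * (C *ᵥ ∑ t ∈ T, v t) i) :
    ∃ i, f - e₀ / (τ * #T) ≤ (#T : 𝕜)⁻¹ * ∑ t ∈ T, (s t i - b i) := by
  have average_mem : (#T : 𝕜)⁻¹ • ∑ t ∈ T, v t ∈ stdSimplex 𝕜 κ :=
    inv_card_smul_sum_mem_of_convex (convex_stdSimplex 𝕜 κ) hT hv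
  obtain ⟨i, excess⟩ := hlb _ average_mem
  rw [sub_mulVec, replicateCol_mulVec_of_sum_eq_one b average_mem.2, mulVec_smul, Pi.sub_apply,
    Pi.smul_apply, smul_eq_mul] at excess
  have budget := (energy_nonneg_iff_average_le hτ (Nat.cast_pos.2 hT.card_pos) _ _ _).1 (hE i)
  refine ⟨i, ?_⟩
  rw [inv_card_mul_sum_sub_const hT]
  linarith

theorem recharge_deviation_of_long_survival_general {δ : 𝕜} (hτ : 0 < τ) (hf : 0 < f)
    (hδ : -1 < δ)
    (hlb : ∀ x ∈ stdSimplex 𝕜 κ, ∃ i, f ≤ ((C - replicateCol κ b) *ᵥ x) i)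
    (hT : T.Nonempty) (hTbig : (1 + δ) * e₀ / (τ * f) ≤ #T)
    (hv : ∀ t ∈ T, v t ∈ stdSimplex 𝕜 κ)
    (hE : ∀ i, 0 ≤ e₀ + τ * ∑ t ∈ T, s t i - τ * (C *ᵥ ∑ t ∈ T, v t) i) :
    ∃ i, f * δ / (1 + δ) ≤ (1 / #T : 𝕜) * ∑ t ∈ T, (s t i - b i) := by
  obtain ⟨i, hi⟩ := exists_sub_div_le_average_deviation hτ hT hlb hv hE
  rw [one_div]
  exact ⟨i, (mul_div_one_add_le_sub_div hτ (Nat.cast_pos.2 hT.card_pos) hf hδ hTbig).trans hi⟩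

end LinearOrderedField

/-- If `f* > 0` lower-bounds the auxiliary LP and the energies are still nonnegative at
slot `n0 ≥ (1+δ)·e0/(τ·f*)`, then some station's empirical recharge deviation from its
mean must be at least `f*·δ/(1+δ)`. -/
theorem recharge_deviation_of_long_survival
    {M : ℕ} (hM : 2 ≤ M)
    (τ : ℝ) (hτ : 0 < τ)
    (C : Matrix (Fin M) (Fin M) ℝ) (hC : ∀ i j, 0 ≤ C i j)
    (sbar : Fin M → ℝ)
    (fstar δ e0 : ℝ) (hfstar : 0 < fstar) (hδ : 0 < δ) (he0 : 0 < e0)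
    -- `f*` is a lower bound for the auxiliary LP (with `R = C − s̄·uᵀ`)
    (hlb : ∀ vbar : Fin M → ℝ, (∀ m, 0 ≤ vbar m) → (∑ m, vbar m) = 1 →
      ∃ m, fstar ≤ (C - Matrix.of fun i _ => sbar i).mulVec vbar m)
    (n0 : ℕ) (hn0 : 1 ≤ n0) (hn0big : (1 + δ) * e0 / (τ * fstar) ≤ (n0 : ℝ))
    (v : ℕ → Fin M → ℝ) (hvdec : ∀ t, IsDecision (v t))
    (s : ℕ → Fin M → ℝ)
    (hE : ∀ m, 0 ≤ energyVec τ C e0 s v n0 m) :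
    ∃ m, fstar * δ / (1 + δ)
      ≤ (1 / (n0 : ℝ)) * ∑ t ∈ Finset.Icc 1 n0, (s t m - sbar m) := by
  simpa only [Nat.card_Icc, Nat.add_sub_cancel] using
    recharge_deviation_of_long_survival_general hτ hfstar (neg_one_lt_zero.trans hδ)
      (fun x hx => hlb x hx.1 hx.2) (nonempty_Icc.2 hn0) (by simpa using hn0big)
      (fun t _ => (hvdec t).mem_stdSimplex) hE
end

section
/- Let R = C − s̄·uᵀ be invertible with uᵀ·R⁻¹·u ≠ 0, and let ‖R⁻¹‖ denote the ℓ∞ operator norm of R⁻¹ (so ‖R⁻¹·x‖_∞ ≤ ‖R⁻¹‖·‖x‖_∞). Let (v^(t)) be decision vectors, N ∈ ℕ, e0 > 0, d2 > 0, ε1 > 0, ε4 > 0, and suppose: (i) N+1 ≥ e0/(τ·d2); (ii) ‖e^(N+1)‖_∞ ≤ ε1·e0; (iii) ‖(1/(N+1))·Σ_{t=1}^{N+1} (s^(t) − s̄)‖_∞ ≤ ε4. Then, with η = ε1·d2 + ε4, ‖ (1/(N+1))·Σ_{t=1}^{N+1} v^(t) − R⁻¹·u/(uᵀ·R⁻¹·u)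 ‖_∞ ≤ ‖R⁻¹‖·η·( 1 + M·‖R⁻¹·u‖_∞ / |uᵀ·R⁻¹·u| ). -/
open Matrix Finset

/-!
Dividing the energy balance by `τ n` shows that the empirical fractions `a = 𝔼 v⁽ᵗ⁾` satisfy
`R a = κ u + δ` with `κ = e0 / (τ n)`, where `δ` collects the recharge fluctuation and the residual
energy and is therefore small. Hence `a` is within `‖R⁻¹‖ ‖δ‖` of the line through the optimal
fractions `p`. Since the coordinates of both `a` and `p` sum to one, the distance from `a` to `p`
itself exceeds its distance to any point of that line by a factor of at most `1 + M ‖p‖`.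
-/

open scoped BigOperators

section Normalization

variable {𝕜 ι E : Type*}

theorem norm_sub_le_of_apply_eq_one [NontriviallyNormedField 𝕜] [SeminormedAddCommGroup E]
    [NormedSpace 𝕜 E] (φ : E →L[𝕜] 𝕜) {a p : E} (ha : φ a = 1) (hp : φ p = 1) (c : 𝕜) :
    ‖a - p‖ ≤ (1 + ‖φ‖ * ‖p‖) * ‖a - c • p‖ := by
  set w := a - c • p with hw
  have hφw : φ w = 1 - c := by simp [hw, ha, hp]
  have hdecomp : a - p = w - φ w • p := by
    rw [hφw, hw]
    module
  calc ‖a - p‖ = ‖w - φ w • p‖ := by rw [hdecomp]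
    _ ≤ ‖w‖ + ‖φ w‖ * ‖p‖ := (norm_sub_le _ _).trans_eq (by rw [norm_smul])
    _ ≤ ‖w‖ + ‖φ‖ * ‖w‖ * ‖p‖ := by gcongr; exact φ.le_opNorm w
    _ = (1 + ‖φ‖ * ‖p‖) * ‖w‖ := by ring

theorem norm_sum_proj_le_card [Fintype ι] [NontriviallyNormedField 𝕜] :
    ‖∑ i, (ContinuousLinearMap.proj i : (ι → 𝕜) →L[𝕜] 𝕜)‖ ≤ Fintype.card ι := by
  refine ContinuousLinearMap.opNorm_le_bound _ (Nat.cast_nonneg _) fun x => ?_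
  calc ‖(∑ i, (ContinuousLinearMap.proj i : (ι → 𝕜) →L[𝕜] 𝕜)) x‖ = ‖∑ i, x i‖ := by simp
    _ ≤ ∑ i, ‖x i‖ := norm_sum_le _ _
    _ ≤ Fintype.card ι * ‖x‖ := by simpa using Pi.sum_norm_apply_le_norm x

theorem norm_sub_le_of_sum_eq_one [Fintype ι] [NontriviallyNormedField 𝕜] {a p : ι → 𝕜}
    (ha : ∑ i, a i = 1) (hp : ∑ i, p i = 1) (c : 𝕜) :
    ‖a - p‖ ≤ (1 + Fintype.card ι * ‖p‖) * ‖a - c • p‖ :=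
  (norm_sub_le_of_apply_eq_one (∑ i, ContinuousLinearMap.proj i)
    (by simpa using ha) (by simpa using hp) c).trans (by gcongr; exact norm_sum_proj_le_card)

end Normalization

section OptimalFractions

variable {𝕜 ι : Type*} [Fintype ι] [DecidableEq ι]

/-- The optimal fractions `R⁻¹·u / (uᵀ·R⁻¹·u)` of active time: the multiple of `R⁻¹·u` whose
coordinates sum to one. The value is `0` when `uᵀ·R⁻¹·u = 0`. -/
noncomputable def optimalFractions [Field 𝕜] (R : Matrix ι ι 𝕜) : ι → 𝕜 :=
  (∑ i, (R⁻¹ *ᵥ 1) i)⁻¹ • R⁻¹ *ᵥ 1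

theorem optimalFractions_eq_div [Field 𝕜] (R : Matrix ι ι 𝕜) :
    optimalFractions R = fun i => (R⁻¹ *ᵥ 1) i / ∑ j, (R⁻¹ *ᵥ 1) j :=
  funext fun _ => inv_mul_eq_div _ _

theorem norm_optimalFractions [NormedField 𝕜] (R : Matrix ι ι 𝕜) :
    ‖optimalFractions R‖ = ‖R⁻¹ *ᵥ 1‖ / ‖∑ i, (R⁻¹ *ᵥ 1) i‖ := by
  rw [optimalFractions, norm_smul, norm_inv, inv_mul_eq_div]

theorem sum_optimalFractions [Field 𝕜] {R : Matrix ι ι 𝕜} (hq : ∑ i, (R⁻¹ *ᵥ 1) i ≠ 0) :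
    ∑ i, optimalFractions R i = 1 := by
  simp only [optimalFractions, Pi.smul_apply, smul_eq_mul, ← mul_sum, inv_mul_cancel₀ hq]

theorem norm_sub_optimalFractions_le [NontriviallyNormedField 𝕜] {R : Matrix ι ι 𝕜}
    (hR : IsUnit R.det) (hq : ∑ i, (R⁻¹ *ᵥ 1) i ≠ 0) {a : ι → 𝕜} (ha : ∑ i, a i = 1) (κ : 𝕜) :
    ‖a - optimalFractions R‖ ≤
      (1 + Fintype.card ι * ‖optimalFractions R‖) * ‖R⁻¹ *ᵥ (R *ᵥ a - κ • 1)‖ := by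
  have hsolve : R⁻¹ *ᵥ (R *ᵥ a - κ • 1) =
      a - (κ * ∑ i, (R⁻¹ *ᵥ 1) i) • optimalFractions R := by
    rw [mulVec_sub, mulVec_mulVec, nonsing_inv_mul R hR, one_mulVec, mulVec_smul,
      optimalFractions, smul_smul, mul_inv_cancel_right₀ hq]
  rw [hsolve]
  exact norm_sub_le_of_sum_eq_one ha (sum_optimalFractions hq) _

end OptimalFractions

theorem sub_replicateCol_mulVec_of_sum_eq_one {m n α : Type*} [Fintype n] [NonAssocRing α]
    (C : Matrix m n α) (x : m → α) {a : n → α} (ha : ∑ j, a j = 1) :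
    (C - replicateCol n x) *ᵥ a = C *ᵥ a - x := by
  rw [sub_mulVec]
  congr 1
  ext i
  simp [mulVec, dotProduct, ← mul_sum, ha]

section EmpiricalAverage

variable {ι κ 𝕜 : Type*} [Semifield 𝕜] [CharZero 𝕜]

theorem sum_expect_eq_one [Fintype ι] {T : Finset κ} (hT : T.Nonempty) {v : κ → ι → 𝕜}
    (hv : ∀ t ∈ T, ∑ i, v t i = 1) : ∑ i, (𝔼 t ∈ T, v t) i = 1 := by
  simp only [expect_apply]
  rw [← expect_sum_comm, expect_congr rfl hv, expect_const hT]

theorem expect_Icc_one_succ_eq (x : ℕ → ι → 𝕜) (N : ℕ) :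
    𝔼 t ∈ Icc 1 (N + 1), x t = fun i => 1 / ((N : 𝕜) + 1) * ∑ t ∈ Icc 1 (N + 1), x t i := by
  ext i
  simp [expect_apply, expect_eq_sum_div_card, div_eq_inv_mul]

end EmpiricalAverage

section EnergyBalance

variable {M n : ℕ} {τ e0 : ℝ} {C : Matrix (Fin M) (Fin M) ℝ} {sbar : Fin M → ℝ}
  {s v : ℕ → Fin M → ℝ}

theorem inv_smul_energyVec (hτ : τ ≠ 0) (hn : n ≠ 0) :
    (τ * n)⁻¹ • energyVec τ C e0 s v n =
      (e0 / (τ * n)) • 1 + 𝔼 t ∈ Icc 1 n, s t - C *ᵥ 𝔼 t ∈ Icc 1 n, v t := by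
  have hv : ∑ t ∈ Icc 1 n, v t = (n : ℝ) • 𝔼 t ∈ Icc 1 n, v t := by
    rw [← card_smul_expect, Nat.card_Icc, Nat.add_sub_cancel, Nat.cast_smul_eq_nsmul]
  ext m
  simp only [energyVec, hv, mulVec_smul, Pi.smul_apply, Pi.add_apply, Pi.sub_apply, Pi.one_apply,
    smul_eq_mul, expect_apply, expect_eq_sum_div_card, Nat.card_Icc, Nat.add_sub_cancel]
  field_simp

theorem mulVec_expect_sub_smul_one (hτ : τ ≠ 0) (hn : n ≠ 0) (s : ℕ → Fin M → ℝ)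
    (hv : ∑ m, (𝔼 t ∈ Icc 1 n, v t) m = 1) :
    (C - replicateCol (Fin M) sbar) *ᵥ (𝔼 t ∈ Icc 1 n, v t) - (e0 / (τ * n)) • 1 =
      𝔼 t ∈ Icc 1 n, (s t - sbar) - (τ * n)⁻¹ • energyVec τ C e0 s v n := by
  have hslots : (Icc 1 n).Nonempty := nonempty_Icc.2 (Nat.one_le_iff_ne_zero.2 hn)
  rw [sub_replicateCol_mulVec_of_sum_eq_one C sbar hv, inv_smul_energyVec hτ hn,
    expect_sub_distrib, expect_const hslots]
  abel

theorem norm_expect_sub_inv_smul_energyVec_le {d2 ε1 ε4 : ℝ} (hτ : 0 < τ)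
    (he0 : 0 < e0) (hd2 : 0 < d2) (h1 : e0 / (τ * d2) ≤ n)
    (h2 : ‖energyVec τ C e0 s v n‖ ≤ ε1 * e0) (h3 : ‖𝔼 t ∈ Icc 1 n, (s t - sbar)‖ ≤ ε4) :
    ‖𝔼 t ∈ Icc 1 n, (s t - sbar) - (τ * n)⁻¹ • energyVec τ C e0 s v n‖ ≤ ε1 * d2 + ε4 := by
  have hn : (0 : ℝ) < n := (by positivity : 0 < e0 / (τ * d2)).trans_le h1
  have hε1 : 0 ≤ ε1 := nonneg_of_mul_nonneg_left ((norm_nonneg _).trans h2) he0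
  have hκ : e0 / (τ * n) ≤ d2 := by
    rw [div_le_iff₀ (by positivity)] at h1 ⊢
    linarith
  have henergy : ‖(τ * n)⁻¹ • energyVec τ C e0 s v n‖ ≤ ε1 * d2 := by
    rw [norm_smul, Real.norm_of_nonneg (by positivity)]
    calc (τ * n)⁻¹ * ‖energyVec τ C e0 s v n‖ ≤ (τ * n)⁻¹ * (ε1 * e0) := by gcongr
      _ = ε1 * (e0 / (τ * n)) := by ring
      _ ≤ ε1 * d2 := by gcongr
  linarith [norm_sub_le (𝔼 t ∈ Icc 1 n, (s t - sbar)) ((τ * n)⁻¹ • energyVec τ C e0 s v n)]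

end EnergyBalance

theorem empirical_fractions_close_to_optimal_general {M n : ℕ} {τ : ℝ} (hτ : 0 < τ)
    {C R : Matrix (Fin M) (Fin M) ℝ} {sbar : Fin M → ℝ} (hRdef : R = C - replicateCol (Fin M) sbar)
    (hRdet : IsUnit R.det) (hq : ∑ m, (R⁻¹ *ᵥ 1) m ≠ 0)
    {K : ℝ} (hK : ∀ x : Fin M → ℝ, ‖R⁻¹ *ᵥ x‖ ≤ K * ‖x‖)
    {s v : ℕ → Fin M → ℝ} (hv : ∀ t ∈ Icc 1 n, ∑ m, v t m = 1)
    {e0 d2 ε1 ε4 : ℝ} (he0 : 0 < e0) (hd2 : 0 < d2) (h1 : e0 / (τ * d2) ≤ n)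
    (h2 : ‖energyVec τ C e0 s v n‖ ≤ ε1 * e0) (h3 : ‖𝔼 t ∈ Icc 1 n, (s t - sbar)‖ ≤ ε4) :
    ‖𝔼 t ∈ Icc 1 n, v t - optimalFractions R‖ ≤
      K * (ε1 * d2 + ε4) * (1 + M * ‖optimalFractions R‖) := by
  have hn : n ≠ 0 := by
    have : (0 : ℝ) < n := (by positivity : 0 < e0 / (τ * d2)).trans_le h1
    exact_mod_cast this.ne'
  have hK0 : 0 ≤ K := by
    obtain ⟨m, -, -⟩ := exists_ne_zero_of_sum_ne_zero hq
    have : Nonempty (Fin M) := ⟨m⟩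
    simpa using (norm_nonneg _).trans (hK 1)
  have hsum : ∑ m, (𝔼 t ∈ Icc 1 n, v t) m = 1 :=
    sum_expect_eq_one (nonempty_Icc.2 (Nat.one_le_iff_ne_zero.2 hn)) hv
  set δ := R *ᵥ (𝔼 t ∈ Icc 1 n, v t) - (e0 / (τ * n)) • 1 with hδ_def
  have hδ : ‖δ‖ ≤ ε1 * d2 + ε4 := by
    rw [hδ_def, hRdef, mulVec_expect_sub_smul_one hτ.ne' hn s hsum]
    exact norm_expect_sub_inv_smul_energyVec_le hτ he0 hd2 h1 h2 h3
  calc ‖𝔼 t ∈ Icc 1 n, v t - optimalFractions R‖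
      ≤ (1 + M * ‖optimalFractions R‖) * ‖R⁻¹ *ᵥ δ‖ := by
        simpa using norm_sub_optimalFractions_le hRdet hq hsum (e0 / (τ * n))
    _ ≤ (1 + M * ‖optimalFractions R‖) * (K * (ε1 * d2 + ε4)) := by
        gcongr
        exact (hK δ).trans (by gcongr)
    _ = K * (ε1 * d2 + ε4) * (1 + M * ‖optimalFractions R‖) := mul_comm _ _

/-- If by slot `N+1` all stations have essentially exhausted their energy (ii) and the
empirical recharge average is close to its mean (iii), then the empirical fractions of
active time are close to the optimal fractions `R⁻¹·u/(uᵀ·R⁻¹·u)` in `ℓ∞` norm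
(where the norm on `Fin M → ℝ` is the sup norm). -/
theorem empirical_fractions_close_to_optimal
    {M : ℕ} (hM : 2 ≤ M)
    (τ : ℝ) (hτ : 0 < τ)
    (C : Matrix (Fin M) (Fin M) ℝ) (hC : ∀ i j, 0 ≤ C i j)
    (sbar : Fin M → ℝ)
    (u : Fin M → ℝ) (hu : u = fun _ => 1)
    (R : Matrix (Fin M) (Fin M) ℝ) (hRdef : R = C - Matrix.of fun i _ => sbar i)
    (hRdet : IsUnit R.det)
    (hq : (∑ m, R⁻¹.mulVec u m) ≠ 0)
    -- `Rnorm` is an `ℓ∞` operator norm bound for `R⁻¹`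
    (Rnorm : ℝ) (hRnorm : ∀ x : Fin M → ℝ, ‖R⁻¹.mulVec x‖ ≤ Rnorm * ‖x‖)
    (s v : ℕ → Fin M → ℝ) (hvdec : ∀ t, IsDecision (v t))
    (N : ℕ) (e0 d2 ε1 ε4 : ℝ)
    (he0 : 0 < e0) (hd2 : 0 < d2) (hε1 : 0 < ε1) (hε4 : 0 < ε4)
    -- (i)
    (h1 : e0 / (τ * d2) ≤ (N : ℝ) + 1)
    -- (ii)
    (h2 : ‖energyVec τ C e0 s v (N+1)‖ ≤ ε1 * e0)
    -- (iii)
    (h3 : ‖(fun m : Fin M => (1 / ((N : ℝ) + 1)) *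
        ∑ t ∈ Finset.Icc 1 (N+1), (s t m - sbar m))‖ ≤ ε4) :
    ‖(fun m : Fin M => (1 / ((N : ℝ) + 1)) * (∑ t ∈ Finset.Icc 1 (N+1), v t m)
        - R⁻¹.mulVec u m / (∑ m', R⁻¹.mulVec u m'))‖
      ≤ Rnorm * (ε1 * d2 + ε4) *
        (1 + (M : ℝ) * ‖R⁻¹.mulVec u‖ / |∑ m', R⁻¹.mulVec u m'|) := by
  subst hu
  have hgeneral := empirical_fractions_close_to_optimal_general hτ hRdef hRdet hq hRnorm
    (fun t _ => (hvdec t).2) he0 hd2 (mod_cast h1) h2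
    ((congrArg norm (expect_Icc_one_succ_eq _ N)).trans_le h3)
  rwa [norm_optimalFractions, ← mul_div_assoc, expect_Icc_one_succ_eq,
    optimalFractions_eq_div] at hgeneral
end
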